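/- If L is symmetric (L y y' = L y' y for all y, y'), then for every q ∈ Δ the Max-Margin Bayes risk admits the dual linear-programming expression H_M(q) = min { ∑_{y} a y · q y : a : Y → ℝ, (a y + a y') / 2 ≥ L y y' for all y, y' ∈ Y }, and this minimum is attained. -/

import Mathlib

open Finset Set

variable {Y : Type*} [Fintype Y] [DecidableEq Y] [Nonempty Y]

/-- Probability simplex over `Y`. -/
def simplexSet (Y : Type*) [Fintype Y] : Set (Y → ℝ) :=
  {q | (∀ y, 0 ≤ q y) ∧ ∑ y, q y = 1}

/-- Bayes risk of the discrete loss `L`. -/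
noncomputable def HL (L : Y → Y → ℝ) (q : Y → ℝ) : ℝ :=
  ⨅ y : Y, ∑ y', L y y' * q y'

/-- Optimal-label set. -/
noncomputable def ystar (L : Y → Y → ℝ) (q : Y → ℝ) : Set Y :=
  {y | ∑ y', L y y' * q y' = HL L q}

/-- Prediction set of label `y`. -/
noncomputable def predSet (L : Y → Y → ℝ) (y : Y) : Set (Y → ℝ) :=
  {q ∈ simplexSet Y | y ∈ ystar L q}

/-- Max-Margin loss. -/
noncomputable def SM (L : Y → Y → ℝ) (v : Y → ℝ) (y : Y) : ℝ :=
  ⨆ y' : Y, (L y y' + v y' - v y)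

/-- Bayes risk of the Max-Margin loss. -/
noncomputable def HM (L : Y → Y → ℝ) (q : Y → ℝ) : ℝ :=
  ⨅ v : Y → ℝ, ∑ y, q y * SM L v y

/-- Conditional-risk minimizers of the Max-Margin loss. -/
noncomputable def vstarM (L : Y → Y → ℝ) (q : Y → ℝ) : Set (Y → ℝ) :=
  {v | ∑ y, q y * SM L v y = HM L q}

/-- Restricted-Max-Margin loss. -/
noncomputable def SRM (L : Y → Y → ℝ) (v : Y → ℝ) (y : Y) : ℝ :=
  sSup ((fun q => ∑ y', L y y' * q y' + ∑ z, v z * q z) '' predSet L y) - v y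

/-- Bayes risk of the Restricted-Max-Margin loss. -/
noncomputable def HRM (L : Y → Y → ℝ) (q : Y → ℝ) : ℝ :=
  ⨅ v : Y → ℝ, ∑ y, q y * SRM L v y

/-- Conditional-risk minimizers of the Restricted-Max-Margin loss. -/
noncomputable def vstarRM (L : Y → Y → ℝ) (q : Y → ℝ) : Set (Y → ℝ) :=
  {v | ∑ y, q y * SRM L v y = HRM L q}

/-- Max-Min-Margin loss. -/
noncomputable def SMM (L : Y → Y → ℝ) (v : Y → ℝ) (y : Y) : ℝ :=
  sSup ((fun q => (⨅ z : Y, ∑ y', L z y' * q y') + ∑ z, v z * q z) '' simplexSet Y) - v y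

/-- Bayes risk of the Max-Min-Margin loss. -/
noncomputable def HMM (L : Y → Y → ℝ) (q : Y → ℝ) : ℝ :=
  ⨅ v : Y → ℝ, ∑ y, q y * SMM L v y

/-- Transportation polytope `U(q, q)`. -/
def Upoly (q : Y → ℝ) : Set (Y → Y → ℝ) :=
  {Q | (∀ y y', 0 ≤ Q y y') ∧ (∀ y, ∑ y', Q y y' = q y) ∧ (∀ y', ∑ y, Q y y' = q y')}

/-- The constraint set `C_L`. -/
def CL (L : Y → Y → ℝ) : Set (Y → Y → ℝ) :=
  {Q | ∀ y z : Y, ∑ y', L y y' * Q y y' ≤ ∑ y', L z y' * Q y y'}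

/-- The feasible set of the linear program dual to the Max-Margin Bayes risk. -/
def dualFeasible {Y : Type*} (L : Y → Y → ℝ) : Set (Y → ℝ) :=
  {a | ∀ y y' : Y, L y y' ≤ (a y + a y') / 2}

theorem le_SM {Y : Type*} [Fintype Y]
    (L : Y → Y → ℝ) (v : Y → ℝ) (y y' : Y) : L y y' + v y' - v y ≤ SM L v y :=
  le_ciSup (f := fun y' => L y y' + v y' - v y) (Set.finite_range _).bddAbove y'

/-- The Max-Margin losses of a score vector are dual feasible when `L` is symmetric. -/
theorem SM_mem_dualFeasible {Y : Type*} [Fintype Y]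
    {L : Y → Y → ℝ} (hsymm : ∀ y y', L y y' = L y' y) (v : Y → ℝ) :
    SM L v ∈ dualFeasible L := fun y y' => by
  linarith [le_SM L v y y', le_SM L v y' y, hsymm y y']

/-- A dual feasible vector `a` dominates the Max-Margin losses of the scores `-a / 2`. -/
theorem SM_neg_half_le {Y : Type*} [Nonempty Y]
    {L : Y → Y → ℝ} {a : Y → ℝ} (ha : a ∈ dualFeasible L) (y : Y) :
    SM L (fun z => -(a z) / 2) y ≤ a y :=
  ciSup_le fun y' => by linarith [ha y y']

theorem dualFeasible.nonneg {Y : Type*} {L : Y → Y → ℝ} (hnonneg : ∀ y y', 0 ≤ L y y') {a : Y → ℝ}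
    (ha : a ∈ dualFeasible L) (y : Y) : 0 ≤ a y := by
  linarith [ha y y, hnonneg y y]

theorem HM_le_of_mem_dualFeasible {Y : Type*} [Fintype Y] [Nonempty Y]
    {L : Y → Y → ℝ} (hnonneg : ∀ y y', 0 ≤ L y y')
    (hsymm : ∀ y y', L y y' = L y' y) {q : Y → ℝ} (hq : ∀ y, 0 ≤ q y) {a : Y → ℝ}
    (ha : a ∈ dualFeasible L) : HM L q ≤ ∑ y, a y * q y := by
  have hbdd : BddBelow (Set.range fun v : Y → ℝ => ∑ y, q y * SM L v y) := by
    refine ⟨0, ?_⟩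
    rintro _ ⟨v, rfl⟩
    exact Finset.sum_nonneg fun y _ =>
      mul_nonneg (hq y) (dualFeasible.nonneg hnonneg (SM_mem_dualFeasible hsymm v) y)
  refine (ciInf_le hbdd fun z => -(a z) / 2).trans (Finset.sum_le_sum fun y _ => ?_)
  rw [mul_comm]
  exact mul_le_mul_of_nonneg_right (SM_neg_half_le ha y) (hq y)

/-- Truncating a dual feasible vector at `2 * M`, where `M` bounds `L`, keeps it feasible. -/
theorem min_mem_dualFeasible {Y : Type*} {L : Y → Y → ℝ} (hnonneg : ∀ y y', 0 ≤ L y y') {M : ℝ}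
    (hM : ∀ y y', L y y' ≤ M) {a : Y → ℝ} (ha : a ∈ dualFeasible L) :
    (fun y => min (a y) (2 * M)) ∈ dualFeasible L := fun y y' => by
  have h₀ := dualFeasible.nonneg hnonneg ha y
  have h₁ := dualFeasible.nonneg hnonneg ha y'
  have h₂ := ha y y'
  have h₃ := hM y y'
  have h₄ := hnonneg y y'
  rcases min_cases (a y) (2 * M) with h | h <;> rcases min_cases (a y') (2 * M) with h' | h' <;>
    simp only [h.1, h'.1] <;> linarith

theorem isClosed_dualFeasible {Y : Type*} (L : Y → Y → ℝ) : IsClosed (dualFeasible L) := by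
  simp only [dualFeasible, Set.ofPred_forall]
  exact isClosed_iInter fun y => isClosed_iInter fun y' =>
    isClosed_le continuous_const (by fun_prop)

/-- The dual linear program attains its minimum. -/
theorem exists_isMinOn_dualFeasible {Y : Type*} [Fintype Y] [Nonempty Y]
    {L : Y → Y → ℝ} (hnonneg : ∀ y y', 0 ≤ L y y')
    {q : Y → ℝ} (hq : ∀ y, 0 ≤ q y) :
    ∃ a ∈ dualFeasible L, IsMinOn (fun a => ∑ y, a y * q y) (dualFeasible L) a := by
  obtain ⟨M, hM'⟩ := (Set.finite_range fun p : Y × Y => L p.1 p.2).bddAbove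
  have hM : ∀ y y', L y y' ≤ M := fun y y' => hM' ⟨(y, y'), rfl⟩
  have hM₀ : 0 ≤ M :=
    (hnonneg (Classical.arbitrary Y) (Classical.arbitrary Y)).trans (hM _ _)
  have hcompact : IsCompact (Set.Icc (0 : Y → ℝ) (fun _ => 2 * M) ∩ dualFeasible L) :=
    isCompact_Icc.inter_right (isClosed_dualFeasible L)
  have hne : (Set.Icc (0 : Y → ℝ) (fun _ => 2 * M) ∩ dualFeasible L).Nonempty :=
    ⟨fun _ => 2 * M, ⟨fun _ => by simpa using hM₀, le_rfl⟩, fun y y' => by linarith [hM y y']⟩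
  obtain ⟨a, ha, hmin⟩ := hcompact.exists_isMinOn hne
    (f := fun a => ∑ y, a y * q y) (by fun_prop)
  refine ⟨a, ha.2, fun b hb => ?_⟩
  have htrunc : (fun y => min (b y) (2 * M)) ∈
      Set.Icc (0 : Y → ℝ) (fun _ => 2 * M) ∩ dualFeasible L :=
    ⟨⟨fun y => le_min (dualFeasible.nonneg hnonneg hb y) (by simpa using hM₀),
      fun y => min_le_right _ _⟩, min_mem_dualFeasible hnonneg hM hb⟩
  exact (hmin htrunc).trans (Finset.sum_le_sum fun y _ =>
    mul_le_mul_of_nonneg_right (min_le_left _ _) (hq y))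

theorem stmt16 (Y : Type*) [Fintype Y] [DecidableEq Y] [Nonempty Y] (L : Y → Y → ℝ)
    (hcard : 2 ≤ Fintype.card Y)
    (hnonneg : ∀ y y', 0 ≤ L y y')
    (hzero : ∀ y y', L y y' = 0 ↔ y = y')
    (hsymm : ∀ y y', L y y' = L y' y) :
    ∀ q ∈ simplexSet Y,
      IsLeast {r : ℝ | ∃ a : Y → ℝ,
        (∀ y y' : Y, L y y' ≤ (a y + a y') / 2) ∧ r = ∑ y, a y * q y} (HM L q) := by
  rintro q ⟨hq, -⟩
  refine ⟨?_, ?_⟩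
  · obtain ⟨a, ha, hmin⟩ := exists_isMinOn_dualFeasible hnonneg hq
    refine ⟨a, ha, (HM_le_of_mem_dualFeasible hnonneg hsymm hq ha).antisymm ?_⟩
    refine le_ciInf fun v => (hmin (SM_mem_dualFeasible hsymm v)).trans_eq ?_
    exact Finset.sum_congr rfl fun y _ => mul_comm _ _
  · rintro _ ⟨a, ha, rfl⟩
    exact HM_le_of_mem_dualFeasible hnonneg hsymm hq ha
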